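/- arXiv:2604.03615 — 5 statements merged into one kernel-verified Lean document; each statement's English description precedes it below -/
import Mathlib

section
/- Let n ≥ 2 and let L = I_n − A be the Laplacian matrix of the directed cycle C⃗_n, where A_{i,j} = 1 iff j ≡ i+1 (mod n). Then the trace norm of L satisfies ‖L‖_* = Σ_{j=0}^{n−1} 2·sin(πj/n) = 2·cot(π/(2n)). -/
open Matrix

/-- The multiset of singular values of a real square matrix `M`: the nonnegative
square roots of the eigenvalues of `M * Mᵀ` (the roots of its characteristic
polynomial, counted with multiplicity). -/
noncomputable def singularValues {m : Type*} [Fintype m] [DecidableEq m]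
    (M : Matrix m m ℝ) : Multiset ℝ :=
  ((M * Mᵀ).charpoly.roots).map Real.sqrt

/-- The trace norm of a real square matrix: the sum of its singular values. -/
noncomputable def traceNorm {m : Type*} [Fintype m] [DecidableEq m]
    (M : Matrix m m ℝ) : ℝ :=
  (singularValues M).sum

/-- Adjacency matrix of the directed cycle C⃗_n: entry (i,j) is 1 iff j ≡ i+1 (mod n). -/
def cycleAdj (n : ℕ) : Matrix (Fin n) (Fin n) ℝ :=
  fun i j => if (j : ℕ) = ((i : ℕ) + 1) % n then 1 else 0

/-- Adjacency matrix of the directed path P⃗_n: entry (i,j) is 1 iff j = i+1. -/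
def pathAdj (n : ℕ) : Matrix (Fin n) (Fin n) ℝ :=
  fun i j => if (j : ℕ) = (i : ℕ) + 1 then 1 else 0

/-- The outdegree matrix of a digraph with adjacency matrix `A`: the diagonal
matrix of row sums of `A`. -/
noncomputable def outDeg {m : Type*} [Fintype m] [DecidableEq m]
    (A : Matrix m m ℝ) : Matrix m m ℝ :=
  Matrix.diagonal (fun i => ∑ j, A i j)

/-- Adjacency matrix of the oriented star S⃗_n(x,y) on n = x+y+1 vertices:
vertex 0 is the center, vertices 1..x are the out-neighbours of the center and
vertices x+1..x+y are its in-neighbours. -/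
def starAdj (x y : ℕ) : Matrix (Fin (x + y + 1)) (Fin (x + y + 1)) ℝ :=
  fun i j =>
    if (i : ℕ) = 0 ∧ 1 ≤ (j : ℕ) ∧ (j : ℕ) ≤ x then 1
    else if (j : ℕ) = 0 ∧ x + 1 ≤ (i : ℕ) then 1 else 0

/-- Adjacency matrix of the out-star S⃗_n(n-1,0): vertex 0 is the center with
arcs to all other vertices, and there are no other arcs. -/
def outStarAdj (n : ℕ) : Matrix (Fin n) (Fin n) ℝ :=
  fun i j => if (i : ℕ) = 0 ∧ (j : ℕ) ≠ 0 then 1 else 0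

/-- Adjacency matrix of the disjoint union C⃗_{n-1} ∪ K₁: a directed (n-1)-cycle
on the first n-1 vertices together with an isolated last vertex. -/
def cycleK1Adj (n : ℕ) : Matrix (Fin n) (Fin n) ℝ :=
  fun i j =>
    if (i : ℕ) < n - 1 ∧ (j : ℕ) < n - 1 ∧ (j : ℕ) = ((i : ℕ) + 1) % (n - 1) then 1 else 0

/-!
The cyclic shift `A` is unitary and its eigenvectors, the columns of the transposed Vandermonde
matrix of the `n`-th roots of unity `ζ ^ j`, are also eigenvectors of `Aᴴ`, for the conjugate
eigenvalues. Hence `1 - A` is diagonalised together with its adjoint, and its singular values are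
`‖1 - ζ ^ j‖ = 2 * sin (π * j / n)`. Their sum is evaluated by the closed formula for sums of sines
in arithmetic progression.
-/

section Diagonalization

variable {m R : Type*} [Fintype m] [DecidableEq m]

lemma charpoly_eq_of_semiconjBy [CommRing R] {P M N : Matrix m m R} (hP : IsUnit P)
    (h : SemiconjBy P N M) : M.charpoly = N.charpoly := by
  obtain ⟨U, rfl⟩ := hP
  rw [← charpoly_units_conj U N, h.eq, mul_assoc, ← coe_units_inv, U.mul_inv, mul_one]

lemma roots_charpoly_diagonal [CommRing R] [IsDomain R] (d : m → R) :
    (diagonal d).charpoly.roots = Finset.univ.val.map d := by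
  rw [charpoly_diagonal, ← Polynomial.roots_multiset_prod_X_sub_C (Finset.univ.val.map d),
    Multiset.map_map]
  rfl

lemma semiconjBy_star_right_of_mem_unitary [Monoid R] [StarMul R] {a x y : R}
    (hx : x ∈ unitary R) (hy : y ∈ unitary R) (h : SemiconjBy a x y) :
    SemiconjBy a (star x) (star y) :=
  SemiconjBy.units_inv_right (x := Unitary.toUnits ⟨x, hx⟩) (y := Unitary.toUnits ⟨y, hy⟩) h

lemma diagonal_mem_unitary [Semiring R] [StarRing R] {d : m → R} (hd : ∀ i, d i ∈ unitary R) :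
    diagonal d ∈ unitary (Matrix m m R) := by
  have star_mul_d (i : m) : star (d i) * d i = 1 := Unitary.star_mul_self_of_mem (hd i)
  have d_mul_star (i : m) : d i * star (d i) = 1 := Unitary.mul_star_self_of_mem (hd i)
  simp [Unitary.mem_iff, star_eq_conjTranspose, diagonal_conjTranspose, star_mul_d, d_mul_star]

lemma permMatrix_mem_unitary [Semiring R] [StarRing R] (σ : Equiv.Perm m) :
    σ.permMatrix R ∈ unitary (Matrix m m R) := by
  simp only [Unitary.mem_iff, star_eq_conjTranspose, conjTranspose_permMatrix, ← permMatrix_mul,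
    mul_inv_cancel, inv_mul_cancel, permMatrix_one, and_self]

lemma charpoly_mul_transpose_of_semiconjBy {M : Matrix m m ℝ} {P : Matrix m m ℂ} {d : m → ℂ}
    (hP : IsUnit P) (hM : SemiconjBy P (diagonal d) (Complex.ofRealHom.mapMatrix M))
    (hM_star : SemiconjBy P (star (diagonal d)) (star (Complex.ofRealHom.mapMatrix M))) :
    (M * Mᵀ).charpoly = (diagonal fun i ↦ ‖d i‖ ^ 2).charpoly := by
  have map_transpose : Complex.ofRealHom.mapMatrix Mᵀ = star (Complex.ofRealHom.mapMatrix M) := by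
    ext i j
    simp
  have diagonal_mul_star :
      diagonal d * star (diagonal d) =
        Complex.ofRealHom.mapMatrix (diagonal fun i ↦ ‖d i‖ ^ 2) := by
    simp [star_eq_conjTranspose, diagonal_conjTranspose, diagonal_map, Complex.mul_conj']
  have h := hM.mul_right hM_star
  rw [diagonal_mul_star, ← map_transpose, ← map_mul] at h
  apply Polynomial.map_injective Complex.ofRealHom Complex.ofReal_injective
  simpa only [← charpoly_map, RingHom.mapMatrix_apply] using charpoly_eq_of_semiconjBy hP h

lemma singularValues_eq_map_norm_of_semiconjBy {M : Matrix m m ℝ} {P : Matrix m m ℂ} {d : m → ℂ}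
    (hP : IsUnit P) (hM : SemiconjBy P (diagonal d) (Complex.ofRealHom.mapMatrix M))
    (hM_star : SemiconjBy P (star (diagonal d)) (star (Complex.ofRealHom.mapMatrix M))) :
    singularValues M = Finset.univ.val.map fun i ↦ ‖d i‖ := by
  rw [singularValues, charpoly_mul_transpose_of_semiconjBy hP hM hM_star, roots_charpoly_diagonal,
    Multiset.map_map]
  exact Multiset.map_congr rfl fun i _ ↦ Real.sqrt_sq (norm_nonneg _)

end Diagonalization

section Cycle

variable {n : ℕ}

lemma val_finRotate (i : Fin n) : (finRotate n i : ℕ) = (i + 1) % n := by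
  have := i.neZero
  rw [finRotate_apply, Fin.val_add, Fin.val_one', Nat.add_mod_mod]

lemma cycleAdj_eq_permMatrix (n : ℕ) : cycleAdj n = (finRotate n).permMatrix ℝ := by
  ext i j
  simp only [cycleAdj, ← val_finRotate, PEquiv.toMatrix_apply, Equiv.toPEquiv_apply,
    Option.mem_some_iff, Fin.ext_iff, eq_comm]

lemma semiconjBy_vandermonde_transpose_permMatrix_finRotate {R : Type*} [CommRing R]
    {v : Fin n → R} (hv : ∀ j, v j ^ n = 1) :
    SemiconjBy (vandermonde v)ᵀ (diagonal v) ((finRotate n).permMatrix R) := by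
  ext i j
  rw [mul_diagonal, PEquiv.toMatrix_toPEquiv_mul, submatrix_apply, id, transpose_apply,
    transpose_apply, vandermonde_apply, vandermonde_apply, val_finRotate, ← pow_succ,
    ← pow_eq_pow_mod _ (hv j)]

lemma singularValues_one_sub_cycleAdj_of_pow_eq_one {v : Fin n → ℂ} (hv : ∀ j, v j ^ n = 1)
    (hv_inj : Function.Injective v) :
    singularValues (1 - cycleAdj n) = Finset.univ.val.map fun j ↦ ‖1 - v j‖ := by
  have isUnit_vandermonde : IsUnit (vandermonde v)ᵀ := by
    rwa [isUnit_iff_isUnit_det, det_transpose, isUnit_iff_ne_zero, det_vandermonde_ne_zero_iff]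
  have v_mem_unitary (j : Fin n) : v j ∈ unitary ℂ := by
    have norm_v : ‖v j‖ = 1 := Complex.norm_eq_one_of_pow_eq_one (hv j) j.pos.ne'
    simp [Unitary.mem_iff_star_mul_self, Complex.conj_mul', norm_v]
  have map_one_sub : Complex.ofRealHom.mapMatrix (1 - cycleAdj n) =
      1 - (finRotate n).permMatrix ℂ := by
    rw [map_sub, map_one, cycleAdj_eq_permMatrix, RingHom.mapMatrix_apply, PEquiv.map_toMatrix]
  have diagonal_one_sub : diagonal (fun j ↦ 1 - v j) = 1 - diagonal v := by
    rw [← diagonal_one, diagonal_sub]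
  have shift := semiconjBy_vandermonde_transpose_permMatrix_finRotate hv
  have shift_star := semiconjBy_star_right_of_mem_unitary (diagonal_mem_unitary v_mem_unitary)
    (permMatrix_mem_unitary (finRotate n)) shift
  apply singularValues_eq_map_norm_of_semiconjBy isUnit_vandermonde <;>
    rw [map_one_sub, diagonal_one_sub]
  · exact (SemiconjBy.one_right _).sub_right shift
  · rw [star_sub, star_sub, star_one]
    exact (SemiconjBy.one_right _).sub_right shift_star

lemma norm_one_sub_exp_two_pi_mul_I_div_pow {j : ℕ} (hj : j ≤ n) :
    ‖1 - Complex.exp (2 * Real.pi * Complex.I / n) ^ j‖ = 2 * Real.sin (Real.pi * j / n) := by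
  have exp_pow : Complex.exp (2 * Real.pi * Complex.I / n) ^ j =
      Complex.exp (Complex.I * (2 * (Real.pi * j / n) : ℝ)) := by
    rw [← Complex.exp_nat_mul]
    push_cast
    ring_nf
  have sin_nonneg : 0 ≤ Real.sin (Real.pi * j / n) := by
    apply Real.sin_nonneg_of_nonneg_of_le_pi (by positivity)
    rw [mul_div_assoc]
    exact mul_le_of_le_one_right Real.pi_nonneg
      (div_le_one_of_le₀ (Nat.cast_le.mpr hj) n.cast_nonneg)
  rw [norm_sub_rev, exp_pow, Complex.norm_exp_I_mul_ofReal_sub_one,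
    mul_div_cancel_left₀ _ two_ne_zero, Real.norm_of_nonneg (by positivity)]

lemma singularValues_one_sub_cycleAdj (hn : n ≠ 0) :
    singularValues (1 - cycleAdj n) =
      Finset.univ.val.map fun j : Fin n ↦ 2 * Real.sin (Real.pi * j / n) := by
  have hζ := Complex.isPrimitiveRoot_exp n hn
  rw [singularValues_one_sub_cycleAdj_of_pow_eq_one
    (v := fun j ↦ Complex.exp (2 * Real.pi * Complex.I / n) ^ (j : ℕ))
    (fun j ↦ by rw [pow_right_comm, hζ.pow_eq_one, one_pow])
    (fun i j hij ↦ Fin.ext (hζ.pow_inj i.isLt j.isLt hij))]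
  exact Multiset.map_congr rfl fun j _ ↦ norm_one_sub_exp_two_pi_mul_I_div_pow j.isLt.le

lemma traceNorm_one_sub_cycleAdj (hn : n ≠ 0) :
    traceNorm (1 - cycleAdj n) = ∑ j ∈ Finset.range n, 2 * Real.sin (Real.pi * j / n) := by
  rw [traceNorm, singularValues_one_sub_cycleAdj hn]
  exact Fin.sum_univ_eq_sum_range (fun j : ℕ ↦ 2 * Real.sin (Real.pi * j / n)) n

end Cycle

lemma sum_sin_pi_mul_div_eq_cot {n : ℕ} (hn : n ≠ 0) :
    ∑ j ∈ Finset.range n, Real.sin (Real.pi * j / n) = Real.cot (Real.pi / (2 * n)) := by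
  have sin_ne_zero : Real.sin (Real.pi / (2 * n)) ≠ 0 := by
    refine (Real.sin_pos_of_pos_of_lt_pi (by positivity) (div_lt_self Real.pi_pos ?_)).ne'
    exact_mod_cast (by omega : 1 < 2 * n)
  have half_angle : Real.pi / n / 2 = Real.pi / (2 * n) := by field_simp
  have half_total : n * (Real.pi / n) / 2 = Real.pi / 2 := by field_simp
  have mean_angle : (n - 1) * (Real.pi / n) / 2 + 0 = Real.pi / 2 - Real.pi / (2 * n) := by
    field_simp
    ring
  have sum_mul := Real.sin_mul_sum_sin n (Real.pi / n) 0
  rw [half_angle, half_total, mean_angle, Real.sin_pi_div_two, one_mul, Real.sin_pi_div_two_sub]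
    at sum_mul
  rw [Real.cot_eq_cos_div_sin, eq_div_iff sin_ne_zero, mul_comm, ← sum_mul]
  simp only [add_zero, div_mul_eq_mul_div]

theorem cycle_laplacian_trace_norm (n : ℕ) (hn : 2 ≤ n) :
    traceNorm (1 - cycleAdj n) = ∑ j ∈ Finset.range n, 2 * Real.sin (Real.pi * j / n) ∧
    traceNorm (1 - cycleAdj n) = 2 * Real.cot (Real.pi / (2 * n)) := by
  have hn_ne_zero : n ≠ 0 := by omega
  have trace_eq_sum := traceNorm_one_sub_cycleAdj hn_ne_zero
  refine ⟨trace_eq_sum, ?_⟩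
  rw [trace_eq_sum, ← Finset.mul_sum, sum_sin_pi_mul_div_eq_cot hn_ne_zero]
end

section
/- Let n ≥ 2 and let L be the Laplacian matrix of the directed path P⃗_n, i.e. L = Δ⁺ − A where A is the n×n real matrix with A_{i,i+1} = 1 for 1 ≤ i ≤ n−1 and all other entries 0, and Δ⁺ = diag(1,…,1,0). Then the multiset of eigenvalues of L·Lᵀ is {4·sin²(πj/(2n)) : j = 0, 1, …, n−1}; equivalently, the singular values of L are 2·sin(πj/(2n)) for j = 0, 1, …, n−1. -/
open Matrix

/-!
The matrix `Lᵀ * L` is the Laplacian of the undirected path, which acts as the discrete Neumann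
Laplacian `c k ↦ 2 c k - c (k - 1) - c (k + 1)` on sequences that are even about both ends of the
path. For `t = π j / (2 n)` the sequence `cos ((2 k + 1) t)` has this symmetry and is an eigenvector
with eigenvalue `4 sin² t`. The `n` angles lie in `[0, π / 2)`, where `sin²` is injective, so these
are all the eigenvalues of `Lᵀ * L`, which has the same characteristic polynomial as `L * Lᵀ`.
-/

section Eigenvalues

open Finset

variable {ι m R : Type*} [Fintype m] [DecidableEq m] [CommRing R] [IsDomain R]

theorem isRoot_charpoly_of_mulVec_eq_smul {M : Matrix m m R} {μ : R} {v : m → R} (hv : v ≠ 0)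
    (hMv : M *ᵥ v = μ • v) : M.charpoly.IsRoot μ := by
  rw [← charpoly_toLin', ← Module.End.hasEigenvalue_iff_isRoot_charpoly]
  exact Module.End.hasEigenvalue_of_hasEigenvector
    (Module.End.hasEigenvector_iff.mpr ⟨Module.End.mem_eigenspace_iff.mpr hMv, hv⟩)

theorem charpoly_roots_eq_map_of_mulVec_eq_smul {M : Matrix m m R} {s : Finset ι} {μ : ι → R}
    {v : ι → m → R} (hcard : Fintype.card m ≤ #s) (hμ : Set.InjOn μ s) (hv : ∀ i ∈ s, v i ≠ 0)
    (hMv : ∀ i ∈ s, M *ᵥ v i = μ i • v i) : M.charpoly.roots = s.val.map μ := by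
  classical
  rw [← image_val_of_injOn hμ]
  refine Polynomial.roots_eq_of_natDegree_le_card_of_ne_zero ?_ ?_ M.charpoly_monic.ne_zero
  · exact forall_mem_image.mpr fun i hi =>
      isRoot_charpoly_of_mulVec_eq_smul (hv i hi) (hMv i hi)
  · rwa [charpoly_natDegree_eq_dim, card_image_of_injOn hμ]

end Eigenvalues

section Laplacian

variable {m : Type*} [Fintype m] [DecidableEq m]

/-- The Laplacian matrix `Δ⁺ - A` of the digraph with adjacency matrix `A`. -/
noncomputable def digraphLaplacian (A : Matrix m m ℝ) : Matrix m m ℝ :=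
  outDeg A - A

theorem digraphLaplacian_mulVec_apply (A : Matrix m m ℝ) (v : m → ℝ) (i : m) :
    (digraphLaplacian A *ᵥ v) i = ∑ j, A i j * (v i - v j) := by
  rw [digraphLaplacian, outDeg, sub_mulVec, Pi.sub_apply, mulVec_diagonal]
  simp only [mulVec, dotProduct, Finset.sum_mul, mul_sub, Finset.sum_sub_distrib]

theorem digraphLaplacian_transpose_mulVec_apply (A : Matrix m m ℝ) (v : m → ℝ) (i : m) :
    ((digraphLaplacian A)ᵀ *ᵥ v) i = ∑ j, A i j * v i - ∑ j, A j i * v j := by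
  rw [digraphLaplacian, outDeg, transpose_sub, diagonal_transpose, sub_mulVec, Pi.sub_apply,
    mulVec_diagonal, Finset.sum_mul]
  simp only [mulVec, dotProduct, transpose_apply]

end Laplacian

section Path

variable {n : ℕ}

theorem sum_pathAdj_mul (i : Fin n) {f : ℕ → ℝ} (hf : (i : ℕ) + 1 = n → f n = 0) :
    ∑ j : Fin n, pathAdj n i j * f j = f (i + 1) := by
  simp only [pathAdj, ite_mul, one_mul, zero_mul]
  rw [Fin.sum_univ_eq_sum_range (fun j => if j = (i : ℕ) + 1 then f j else 0), Finset.sum_ite_eq']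
  grind

theorem sum_pathAdj_mul_succ (j : Fin n) {f : ℕ → ℝ} (hf : f 0 = 0) :
    ∑ i : Fin n, pathAdj n i j * f (i + 1) = f j := by
  obtain ⟨_ | k, hk⟩ := j
  · simp [pathAdj, hf]
  · simp only [pathAdj, Nat.add_right_cancel_iff, ite_mul, one_mul, zero_mul]
    rw [Fin.sum_univ_eq_sum_range (fun i => if k = i then f (i + 1) else 0), Finset.sum_ite_eq,
      if_pos (Finset.mem_range.mpr (Nat.lt_of_succ_lt hk))]

/-- The Laplacian matrix of the directed path on `n` vertices. -/
noncomputable abbrev pathLaplacian (n : ℕ) : Matrix (Fin n) (Fin n) ℝ :=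
  digraphLaplacian (pathAdj n)

theorem pathLaplacian_mulVec {c : ℕ → ℝ} (hc : c n = c (n + 1)) :
    pathLaplacian n *ᵥ (fun k : Fin n => c (k + 1)) =
      fun k : Fin n => c (k + 1) - c (k + 2) := by
  ext i
  rw [digraphLaplacian_mulVec_apply,
    sum_pathAdj_mul i (f := fun j => c (i + 1) - c (j + 1)) fun hi => by rw [hi, hc, sub_self]]

theorem pathLaplacian_transpose_mulVec {d : ℕ → ℝ} (hd₀ : d 0 = 0) (hdn : d n = 0) :
    (pathLaplacian n)ᵀ *ᵥ (fun k : Fin n => d (k + 1)) =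
      fun k : Fin n => d (k + 1) - d k := by
  ext i
  rw [digraphLaplacian_transpose_mulVec_apply, sum_pathAdj_mul_succ i hd₀,
    sum_pathAdj_mul i (f := fun _ => d (i + 1)) fun hi => by rw [hi, hdn]]

-- The entries are `c 1, …, c n`; `c 0` and `c (n + 1)` are ghost values encoding the boundary.
theorem pathLaplacian_transpose_mul_self_mulVec {c : ℕ → ℝ} (hc₀ : c 0 = c 1)
    (hcn : c n = c (n + 1)) :
    ((pathLaplacian n)ᵀ * pathLaplacian n) *ᵥ (fun k : Fin n => c (k + 1)) =
      fun k : Fin n => 2 * c (k + 1) - c k - c (k + 2) := by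
  rw [← mulVec_mulVec, pathLaplacian_mulVec hcn,
    pathLaplacian_transpose_mulVec (d := fun k => c k - c (k + 1)) (by rw [hc₀, sub_self])
      (by rw [hcn, sub_self])]
  ext k
  ring

end Path

section Cosines

open Real

variable {n : ℕ}

/-- The sampled cosine `k ↦ cos ((2 k + 1) t)`; for suitable `t` it is an eigenvector of the
Laplacian of the undirected path. The vertices `v₁, …, vₙ` correspond to `k = 0, …, n - 1`. -/
noncomputable def pathCosine (n : ℕ) (t : ℝ) : Fin n → ℝ :=
  fun k => cos ((2 * k + 1) * t)

theorem two_mul_cos_sub_cos_sub_sub_cos_add (x t : ℝ) :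
    2 * cos x - cos (x - 2 * t) - cos (x + 2 * t) = 4 * sin t ^ 2 * cos x := by
  rw [cos_sub, cos_add, cos_two_mul, cos_sq']
  ring

theorem pathLaplacian_transpose_mul_self_mulVec_pathCosine {t : ℝ} (ht : sin (2 * n * t) = 0) :
    ((pathLaplacian n)ᵀ * pathLaplacian n) *ᵥ pathCosine n t =
      (4 * sin t ^ 2) • pathCosine n t := by
  let c : ℕ → ℝ := fun k => cos ((2 * k - 1) * t)
  have even_left : c 0 = c 1 := by
    simp only [c, Nat.cast_zero, Nat.cast_one]
    rw [← cos_neg]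
    ring_nf
  have even_right : c n = c (n + 1) := by
    have h_sub : (2 * (n : ℝ) - 1) * t = 2 * n * t - t := by ring
    have h_add : (2 * ((n + 1 : ℕ) : ℝ) - 1) * t = 2 * n * t + t := by push_cast; ring
    simp only [c, h_sub, h_add, cos_sub, cos_add, ht]
    ring
  have pathCosine_eq : pathCosine n t = fun k : Fin n => c (k + 1) := by
    ext k
    simp only [pathCosine, c]
    push_cast
    ring_nf
  rw [pathCosine_eq, pathLaplacian_transpose_mul_self_mulVec even_left even_right]
  ext k
  rw [Pi.smul_apply, smul_eq_mul, ← two_mul_cos_sub_cos_sub_sub_cos_add]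
  simp only [c]
  push_cast
  ring_nf

theorem pathCosine_ne_zero (hn : n ≠ 0) {t : ℝ} (ht : cos t ≠ 0) : pathCosine n t ≠ 0 := by
  intro h
  have := congrFun h ⟨0, Nat.pos_of_ne_zero hn⟩
  simp [pathCosine, ht] at this

theorem pi_mul_div_two_mul_mem_Ico {j : ℕ} (hj : j < n) : π * j / (2 * n) ∈ Set.Ico 0 (π / 2) := by
  have hn : (0 : ℝ) < n := by exact_mod_cast j.zero_le.trans_lt hj
  have hjn : (j : ℝ) / n < 1 := (div_lt_one hn).mpr (by exact_mod_cast hj)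
  refine ⟨by positivity, ?_⟩
  calc π * j / (2 * n) = π / 2 * (j / n) := by ring
    _ < π / 2 := mul_lt_of_lt_one_right (by positivity) hjn

theorem sin_pi_mul_div_two_mul_nonneg {j : ℕ} (hj : j < n) : 0 ≤ sin (π * j / (2 * n)) := by
  obtain ⟨h_nonneg, h_lt⟩ := pi_mul_div_two_mul_mem_Ico hj
  exact sin_nonneg_of_nonneg_of_le_pi h_nonneg (by linarith)

theorem cos_pi_mul_div_two_mul_pos {j : ℕ} (hj : j < n) : 0 < cos (π * j / (2 * n)) := by
  obtain ⟨h_nonneg, h_lt⟩ := pi_mul_div_two_mul_mem_Ico hj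
  exact cos_pos_of_mem_Ioo ⟨by linarith [pi_pos], h_lt⟩

theorem sin_two_mul_mul_pi_mul_div_two_mul (hn : n ≠ 0) (j : ℕ) :
    sin (2 * n * (π * j / (2 * n))) = 0 := by
  rw [mul_div_cancel₀ _ (by positivity), mul_comm]
  exact sin_nat_mul_pi j

theorem injOn_four_mul_sin_sq : Set.InjOn (fun x => 4 * sin x ^ 2) (Set.Icc 0 (π / 2)) := by
  intro x hx y hy hxy
  have sin_nonneg {z : ℝ} (hz : z ∈ Set.Icc 0 (π / 2)) : 0 ≤ sin z :=
    sin_nonneg_of_nonneg_of_le_pi hz.1 (by linarith [hz.2, pi_pos])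
  have sin_eq : sin x = sin y :=
    (sq_eq_sq₀ (sin_nonneg hx) (sin_nonneg hy)).mp (mul_left_cancel₀ four_ne_zero hxy)
  have Icc_subset : Set.Icc 0 (π / 2) ⊆ Set.Icc (-(π / 2)) (π / 2) :=
    Set.Icc_subset_Icc_left (by linarith [pi_pos])
  exact injOn_sin (Icc_subset hx) (Icc_subset hy) sin_eq

theorem injOn_four_mul_sin_pi_mul_div_two_mul_sq :
    Set.InjOn (fun j : ℕ => 4 * sin (π * j / (2 * n)) ^ 2) (Finset.range n) := by
  intro i hi j hj hij
  rw [Finset.mem_coe, Finset.mem_range] at hi hj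
  have angle_eq : π * i / (2 * n) = π * j / (2 * n) :=
    injOn_four_mul_sin_sq (Set.Ico_subset_Icc_self (pi_mul_div_two_mul_mem_Ico hi))
      (Set.Ico_subset_Icc_self (pi_mul_div_two_mul_mem_Ico hj)) hij
  have hn : (n : ℝ) ≠ 0 := Nat.cast_ne_zero.mpr (Nat.ne_zero_of_lt hi)
  field_simp at angle_eq
  exact_mod_cast angle_eq

theorem pathLaplacian_mul_transpose_charpoly_roots (n : ℕ) :
    (pathLaplacian n * (pathLaplacian n)ᵀ).charpoly.roots =
      (Multiset.range n).map fun j : ℕ => 4 * sin (π * j / (2 * n)) ^ 2 := by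
  rw [charpoly_mul_comm]
  have ne_zero_of_mem {j : ℕ} (hj : j ∈ Finset.range n) : n ≠ 0 :=
    Nat.ne_zero_of_lt (Finset.mem_range.mp hj)
  exact charpoly_roots_eq_map_of_mulVec_eq_smul (s := Finset.range n)
    (v := fun j => pathCosine n (π * j / (2 * n))) (by simp)
    injOn_four_mul_sin_pi_mul_div_two_mul_sq
    (fun j hj => pathCosine_ne_zero (ne_zero_of_mem hj)
      (cos_pi_mul_div_two_mul_pos (Finset.mem_range.mp hj)).ne')
    (fun j hj => pathLaplacian_transpose_mul_self_mulVec_pathCosine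
      (sin_two_mul_mul_pi_mul_div_two_mul (ne_zero_of_mem hj) j))

theorem pathLaplacian_singularValues (n : ℕ) :
    singularValues (pathLaplacian n) =
      (Multiset.range n).map fun j : ℕ => 2 * sin (π * j / (2 * n)) := by
  rw [singularValues, pathLaplacian_mul_transpose_charpoly_roots, Multiset.map_map]
  refine Multiset.map_congr rfl fun j hj => ?_
  have h_nonneg := sin_pi_mul_div_two_mul_nonneg (Multiset.mem_range.mp hj)
  calc √(4 * sin (π * j / (2 * n)) ^ 2) = √((2 * sin (π * j / (2 * n))) ^ 2) := by ring_nf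
    _ = 2 * sin (π * j / (2 * n)) := sqrt_sq (by positivity)

end Cosines

-- Mapped by a function on `ℝ`, `Multiset.range n` elaborates to a monadic lift into `Multiset ℝ`.
theorem map_range_cast {α : Type*} (n : ℕ) (f : ℝ → α) :
    (Multiset.range n : Multiset ℝ).map f = (Multiset.range n).map fun j : ℕ => f j := by
  simp [Multiset.bind_def, Multiset.pure_def, Multiset.bind_singleton, Multiset.map_map]

theorem path_laplacian_singular_values (n : ℕ) (hn : 2 ≤ n) :
    ((outDeg (pathAdj n) - pathAdj n) * (outDeg (pathAdj n) - pathAdj n)ᵀ).charpoly.roots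
      = (Multiset.range n).map (fun j => 4 * Real.sin (Real.pi * j / (2 * n)) ^ 2) ∧
    singularValues (outDeg (pathAdj n) - pathAdj n)
      = (Multiset.range n).map (fun j => 2 * Real.sin (Real.pi * j / (2 * n))) := by
  rw [map_range_cast, map_range_cast]
  exact ⟨pathLaplacian_mul_transpose_charpoly_roots n, pathLaplacian_singularValues n⟩
end

section
/- For every n ≥ 2, the trace norms of the signless Laplacian and Laplacian of the directed cycle satisfy ‖Q(C⃗_n)‖_* ≥ ‖L(C⃗_n)‖_*, with equality if and only if n is even; when n is odd, ‖Q(C⃗_n)‖_* − ‖L(C⃗_n)‖_* = 2·csc(π/(2n)) − 2·cot(π/(2n)) = 2·tan(π/(4n)) > 0. -/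
open Matrix

/-!
The characters of a finite abelian group `G` are a common eigenbasis of all `G`-circulant matrices,
so the trace norm of a real circulant matrix is the sum of the moduli of the Fourier coefficients of
its symbol. For the directed cycle these moduli are `|1 ± exp (2πik/n)|`, which turns both trace
norms into values of one function `S θ = ∑ k < n, |sin (θ + kπ/n)|`: the Laplacian gives `2 * S 0`
and the signless Laplacian `2 * S (π/2)`. As `S` has period `π/n`, the point `π/2` may be replaced
by `0` when `n` is even and by `π/(2n)` when `n` is odd, and on `[0, π/n]` the sum telescopes to
`S θ = cos (θ - π/(2n)) / sin (π/(2n))`.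
-/

open Polynomial in
lemma charpoly_eq_prod_of_eigenbasis {R m ι : Type*} [CommRing R] [Fintype m] [DecidableEq m]
    [Fintype ι] {M : Matrix m m R} (b : Module.Basis ι R (m → R)) {μ : ι → R}
    (hM : ∀ i, M *ᵥ b i = μ i • b i) : M.charpoly = ∏ i, (X - C (μ i)) := by
  classical
  have toMatrix_eq_diagonal : LinearMap.toMatrix b b M.toLin' = diagonal μ := by
    ext i j
    rw [LinearMap.toMatrix_apply, toLin'_apply, hM, map_smul, b.repr_self, diagonal_apply]
    obtain rfl | hij := eq_or_ne i j <;> simp [*]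
  rw [← charpoly_toLin', ← LinearMap.charpoly_toMatrix _ b, toMatrix_eq_diagonal,
    charpoly_diagonal]

open Polynomial in
lemma traceNorm_eq_sum_norm_of_eigenbasis {m ι : Type*} [Fintype m] [DecidableEq m] [Fintype ι]
    {M : Matrix m m ℝ} (b : Module.Basis ι ℂ (m → ℂ)) {μ : ι → ℂ}
    (hM : ∀ i, M.map Complex.ofReal *ᵥ b i = μ i • b i)
    (hMT : ∀ i, Mᵀ.map Complex.ofReal *ᵥ b i = star (μ i) • b i) :
    traceNorm M = ∑ i, ‖μ i‖ := by
  have eigenvalue_mul_transpose (i : ι) :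
      (M * Mᵀ).map Complex.ofRealHom *ᵥ b i = ((‖μ i‖ ^ 2 : ℝ) : ℂ) • b i := by
    rw [Matrix.map_mul]
    change (M.map Complex.ofReal * Mᵀ.map Complex.ofReal) *ᵥ b i = _
    rw [← mulVec_mulVec, hMT, mulVec_smul, hM, smul_smul, Complex.star_def, Complex.conj_mul',
      Complex.ofReal_pow]
  have charpoly_eq : (M * Mᵀ).charpoly = ∏ i, (X - C (‖μ i‖ ^ 2)) := by
    apply Polynomial.map_injective Complex.ofRealHom Complex.ofRealHom.injective
    rw [← charpoly_map, charpoly_eq_prod_of_eigenbasis b eigenvalue_mul_transpose]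
    simp [Polynomial.map_prod]
  have roots_eq : (M * Mᵀ).charpoly.roots = Finset.univ.val.map fun i ↦ ‖μ i‖ ^ 2 := by
    rw [charpoly_eq, roots_prod _ _ (Finset.prod_ne_zero_iff.mpr fun i _ ↦ X_sub_C_ne_zero _)]
    simp only [roots_X_sub_C, Multiset.bind_singleton]
  simp [traceNorm, singularValues, roots_eq]

section Circulant

variable {G : Type*} [AddCommGroup G] [Fintype G]

lemma circulant_mulVec_addChar {R : Type*} [CommSemiring R] (v : G → R) (ψ : AddChar G R) :
    circulant v *ᵥ ψ = (∑ g, v g * ψ (-g)) • ⇑ψ := by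
  ext i
  calc ∑ j, v (i - j) * ψ j
      = ∑ g, v g * ψ (i - g) :=
        Fintype.sum_equiv (Equiv.subLeft i) _ _ fun j ↦ by simp
    _ = (∑ g, v g * ψ (-g)) * ψ i := by
        simp only [sub_eq_add_neg, AddChar.map_add_eq_mul, Finset.sum_mul]
        exact Finset.sum_congr rfl fun g _ ↦ by ring

lemma traceNorm_circulant [DecidableEq G] (v : G → ℝ) :
    traceNorm (circulant v) = ∑ ψ : AddChar G ℂ, ‖∑ g, (v g : ℂ) * ψ (-g)‖ := by
  refine traceNorm_eq_sum_norm_of_eigenbasis (AddChar.complexBasis G) (fun ψ ↦ ?_) fun ψ ↦ ?_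
  · rw [AddChar.complexBasis_apply, map_circulant, circulant_mulVec_addChar]
  · rw [AddChar.complexBasis_apply, transpose_circulant, map_circulant, circulant_mulVec_addChar]
    congr 1
    calc ∑ g, (v (-g) : ℂ) * ψ (-g)
        = ∑ g, (v g : ℂ) * ψ g := Fintype.sum_equiv (Equiv.neg G) _ _ fun g ↦ rfl
      _ = star (∑ g, (v g : ℂ) * ψ (-g)) := by simp [AddChar.map_neg_eq_conj]

end Circulant

section Trigonometry

open Real

-- Where `sin x = 0` both sides vanish, since `⁻¹`, `cot` and `tan` take the value `0` at poles.
lemma inv_sin_sub_cot (x : ℝ) : (sin x)⁻¹ - cot x = tan (x / 2) := by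
  obtain ⟨y, rfl⟩ : ∃ y, x = 2 * y := ⟨x / 2, by ring⟩
  have one_sub_cos : 1 - cos (2 * y) = 2 * sin y * sin y := by
    rw [cos_two_mul, cos_sq']
    ring
  rw [mul_div_cancel_left₀ _ two_ne_zero, cot_eq_cos_div_sin, inv_eq_one_div, ← sub_div,
    one_sub_cos, sin_two_mul, tan_eq_sin_div_cos]
  obtain hy | hy := eq_or_ne (sin y) 0
  · simp [hy]
  · exact mul_div_mul_left _ _ (mul_ne_zero two_ne_zero hy)

lemma sum_sin_mul_two_sin (n : ℕ) (θ h : ℝ) :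
    (∑ k ∈ Finset.range n, sin (θ + k * (2 * h))) * (2 * sin h)
      = cos (θ - h) - cos (θ - h + n * (2 * h)) := by
  have product_to_sum (k : ℕ) : sin (θ + k * (2 * h)) * (2 * sin h)
      = cos (θ - h + k * (2 * h)) - cos (θ - h + (k + 1 : ℕ) * (2 * h)) := by
    rw [← mul_assoc, mul_comm _ 2, two_mul_sin_mul_sin]
    push_cast
    congr 2 <;> ring
  rw [Finset.sum_mul, Finset.sum_congr rfl fun k _ ↦ product_to_sum k,
    Finset.sum_range_sub' fun k : ℕ ↦ cos (θ - h + k * (2 * h)), Nat.cast_zero, zero_mul, add_zero]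

variable (n : ℕ) [NeZero n]

lemma periodic_sum_abs_sin :
    Function.Periodic (fun θ ↦ ∑ k ∈ Finset.range n, |sin (θ + k * (π / n))|) (π / n) := by
  intro θ
  have hn : (n : ℝ) ≠ 0 := NeZero.ne _
  have last_eq_first : |sin (θ + n * (π / n))| = |sin (θ + (0 : ℕ) * (π / n))| := by
    rw [mul_div_cancel₀ _ hn, sin_add_pi, abs_neg, Nat.cast_zero, zero_mul, add_zero]
  calc ∑ k ∈ Finset.range n, |sin (θ + π / n + k * (π / n))|
      = ∑ k ∈ Finset.range n, |sin (θ + (k + 1 : ℕ) * (π / n))| := by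
        refine Finset.sum_congr rfl fun k _ ↦ ?_
        congr 2
        push_cast
        ring
    _ = ∑ k ∈ Finset.range n, |sin (θ + k * (π / n))| := by
        rw [← add_left_inj, ← Finset.sum_range_succ' (fun k : ℕ ↦ |sin (θ + k * (π / n))|),
          Finset.sum_range_succ, last_eq_first]

lemma sin_pi_div_two_mul_pos : 0 < sin (π / (2 * n)) := by
  have hn : (1 : ℝ) ≤ n := mod_cast NeZero.one_le
  exact sin_pos_of_pos_of_lt_pi (by positivity) (div_lt_self pi_pos (by linarith))

lemma sum_abs_sin_of_mem_Icc {θ : ℝ} (hθ : θ ∈ Set.Icc 0 (π / n)) :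
    ∑ k ∈ Finset.range n, |sin (θ + k * (π / n))|
      = cos (θ - π / (2 * n)) / sin (π / (2 * n)) := by
  have hn : (n : ℝ) ≠ 0 := NeZero.ne _
  have two_mul_half_step : 2 * (π / (2 * n)) = π / n := by field_simp
  have sin_nonneg {k : ℕ} (hk : k ∈ Finset.range n) : 0 ≤ sin (θ + k * (π / n)) := by
    have hk' : (k : ℝ) + 1 ≤ n := mod_cast Finset.mem_range.mp hk
    refine sin_nonneg_of_nonneg_of_le_pi (add_nonneg hθ.1 (by positivity)) ?_
    calc θ + k * (π / n) ≤ (k + 1) * (π / n) := by linarith [hθ.2]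
      _ ≤ n * (π / n) := by gcongr
      _ = π := mul_div_cancel₀ _ hn
  have sum_mul_two_sin := sum_sin_mul_two_sin n θ (π / (2 * n))
  rw [two_mul_half_step, mul_div_cancel₀ _ hn, cos_add_pi] at sum_mul_two_sin
  rw [Finset.sum_congr rfl fun k hk ↦ abs_of_nonneg (sin_nonneg hk),
    eq_div_iff (sin_pi_div_two_mul_pos n).ne']
  linarith

lemma sum_abs_sin_zero :
    ∑ k ∈ Finset.range n, |sin (0 + k * (π / n))| = cot (π / (2 * n)) := by
  rw [sum_abs_sin_of_mem_Icc n ⟨le_rfl, by positivity⟩, zero_sub, cos_neg, cot_eq_cos_div_sin]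

variable {n}

lemma sum_abs_sin_pi_div_two_of_even (hn : Even n) :
    ∑ k ∈ Finset.range n, |sin (π / 2 + k * (π / n))| = cot (π / (2 * n)) := by
  obtain ⟨m, rfl⟩ := hn
  have hm : ((m + m : ℕ) : ℝ) ≠ 0 := NeZero.ne _
  have pi_div_two_eq : π / 2 = 0 + m * (π / (m + m : ℕ)) := by
    field_simp
    push_cast
    ring
  rw [pi_div_two_eq, ← sum_abs_sin_zero]
  exact (periodic_sum_abs_sin _).nat_mul m 0

lemma sum_abs_sin_pi_div_two_of_odd (hn : Odd n) :
    ∑ k ∈ Finset.range n, |sin (π / 2 + k * (π / n))| = (sin (π / (2 * n)))⁻¹ := by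
  have mid_mem : π / (2 * n) ∈ Set.Icc 0 (π / n) :=
    ⟨by positivity, by
      have hn0 : (0 : ℝ) < n := Nat.cast_pos.mpr (NeZero.pos n)
      gcongr
      linarith⟩
  obtain ⟨m, hm⟩ := hn
  have pi_div_two_eq : π / 2 = π / (2 * n) + m * (π / n) := by
    have hn0 : (n : ℝ) ≠ 0 := NeZero.ne _
    have hm' : (n : ℝ) = 2 * m + 1 := mod_cast hm
    field_simp
    linarith
  calc ∑ k ∈ Finset.range n, |sin (π / 2 + k * (π / n))|
      = ∑ k ∈ Finset.range n, |sin (π / (2 * n) + k * (π / n))| := by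
        rw [pi_div_two_eq]
        exact (periodic_sum_abs_sin n).nat_mul m _
    _ = (sin (π / (2 * n)))⁻¹ := by
        rw [sum_abs_sin_of_mem_Icc n mid_mem, sub_self, cos_zero, one_div]

end Trigonometry

section Cycle

open Real

variable (n : ℕ) [NeZero n]

lemma cycleAdj_eq_circulant : cycleAdj n = circulant (Pi.single (-1) 1) := by
  ext i j
  have adj_iff : (j : ℕ) = ((i : ℕ) + 1) % n ↔ i - j = -1 := by
    rw [← neg_sub, neg_inj, sub_eq_iff_eq_add', Fin.ext_iff, Fin.val_add, Fin.val_one',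
      Nat.add_mod_mod]
  simp only [cycleAdj, circulant_apply, Pi.single_apply, adj_iff]

open Complex in
lemma sum_addChar_fin_apply_one {M : Type*} [AddCommMonoid M] (f : ℂ → M) :
    ∑ ψ : AddChar (Fin n) ℂ, f (ψ 1)
      = ∑ k ∈ Finset.range n, f (exp (I * (2 * (k * (π / n)) : ℝ))) := by
  obtain ⟨N, rfl⟩ := Nat.exists_eq_succ_of_ne_zero (NeZero.ne n)
  change ∑ ψ : AddChar (ZMod (N + 1)) ℂ, f (ψ 1) = _
  have zmod_apply_one (k : ZMod (N + 1)) :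
      AddChar.zmodAddEquiv k 1 = exp (I * (2 * (k.val * (π / (N + 1 : ℕ))) : ℝ)) := by
    have zmod_eq := AddChar.zmod_intCast (N + 1) k.val 1
    simp only [Int.cast_natCast, ZMod.natCast_zmod_val, Int.cast_one] at zmod_eq
    change ((AddChar.zmod (N + 1) k 1 : Circle) : ℂ) = _
    rw [zmod_eq, Circle.coe_exp]
    push_cast
    ring_nf
  rw [Finset.sum_range, ← AddChar.zmodAddEquiv.toEquiv.sum_comp]
  exact Finset.sum_congr rfl fun k _ ↦ congrArg f (zmod_apply_one k)

lemma traceNorm_one_add_smul_cycleAdj (c : ℝ) :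
    traceNorm (1 + c • cycleAdj n)
      = ∑ k ∈ Finset.range n, ‖1 + c * Complex.exp (Complex.I * (2 * (k * (π / n)) : ℝ))‖ := by
  have eq_circulant :
      1 + c • cycleAdj n = circulant (Pi.single 0 1 + c • Pi.single (-1) 1) := by
    rw [circulant_add, circulant_smul, circulant_single_one, cycleAdj_eq_circulant]
  rw [eq_circulant, traceNorm_circulant, ← sum_addChar_fin_apply_one n fun z ↦ ‖1 + c * z‖]
  refine Finset.sum_congr rfl fun ψ _ ↦ ?_
  simp [add_mul, Finset.sum_add_distrib, Pi.single_apply, apply_ite Complex.ofReal]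

lemma traceNorm_one_sub_cycleAdj_eq_sum :
    traceNorm (1 - cycleAdj n) = 2 * ∑ k ∈ Finset.range n, |sin (0 + k * (π / n))| := by
  rw [sub_eq_add_neg, ← neg_one_smul ℝ, traceNorm_one_add_smul_cycleAdj, Finset.mul_sum]
  refine Finset.sum_congr rfl fun k _ ↦ ?_
  rw [Complex.ofReal_neg, Complex.ofReal_one, neg_one_mul, ← sub_eq_add_neg, norm_sub_rev,
    Complex.norm_exp_I_mul_ofReal_sub_one, norm_mul, norm_two, norm_eq_abs, zero_add,
    mul_div_cancel_left₀ _ two_ne_zero]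

lemma traceNorm_one_add_cycleAdj_eq_sum :
    traceNorm (1 + cycleAdj n) = 2 * ∑ k ∈ Finset.range n, |sin (π / 2 + k * (π / n))| := by
  rw [← one_smul ℝ (cycleAdj n), traceNorm_one_add_smul_cycleAdj, Finset.mul_sum]
  refine Finset.sum_congr rfl fun k _ ↦ ?_
  have exp_add_pi : Complex.exp (Complex.I * (2 * (π / 2 + k * (π / n)) : ℝ))
      = -Complex.exp (Complex.I * (2 * (k * (π / n)) : ℝ)) := by
    rw [← Complex.exp_add_pi_mul_I]
    push_cast
    ring_nf
  rw [Complex.ofReal_one, one_mul, ← sub_neg_eq_add, ← exp_add_pi, norm_sub_rev,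
    Complex.norm_exp_I_mul_ofReal_sub_one, norm_mul, norm_two, norm_eq_abs,
    mul_div_cancel_left₀ _ two_ne_zero]

lemma traceNorm_one_sub_cycleAdj_s11 : traceNorm (1 - cycleAdj n) = 2 * cot (π / (2 * n)) := by
  rw [traceNorm_one_sub_cycleAdj_eq_sum, sum_abs_sin_zero]

variable {n}

lemma traceNorm_one_add_cycleAdj_of_even (hn : Even n) :
    traceNorm (1 + cycleAdj n) = 2 * cot (π / (2 * n)) := by
  rw [traceNorm_one_add_cycleAdj_eq_sum, sum_abs_sin_pi_div_two_of_even hn]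

lemma traceNorm_one_add_cycleAdj_of_odd (hn : Odd n) :
    traceNorm (1 + cycleAdj n) = 2 * (sin (π / (2 * n)))⁻¹ := by
  rw [traceNorm_one_add_cycleAdj_eq_sum, sum_abs_sin_pi_div_two_of_odd hn]

end Cycle

theorem cycle_signless_vs_laplacian_trace_norm (n : ℕ) (hn : 2 ≤ n) :
    traceNorm (1 - cycleAdj n) ≤ traceNorm (1 + cycleAdj n) ∧
    (traceNorm (1 + cycleAdj n) = traceNorm (1 - cycleAdj n) ↔ Even n) ∧
    (Odd n →
      traceNorm (1 + cycleAdj n) - traceNorm (1 - cycleAdj n)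
        = 2 * (Real.sin (Real.pi / (2 * n)))⁻¹ - 2 * Real.cot (Real.pi / (2 * n)) ∧
      traceNorm (1 + cycleAdj n) - traceNorm (1 - cycleAdj n)
        = 2 * Real.tan (Real.pi / (4 * n)) ∧
      0 < 2 * Real.tan (Real.pi / (4 * n))) := by
  have : NeZero n := ⟨by lia⟩
  have hn_cast : (2 : ℝ) ≤ n := mod_cast hn
  have tan_pos : 0 < Real.tan (Real.pi / (4 * n)) :=
    Real.tan_pos_of_pos_of_lt_pi_div_two (by positivity) (by gcongr; linarith)
  have csc_sub_cot : (Real.sin (Real.pi / (2 * n)))⁻¹ - Real.cot (Real.pi / (2 * n))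
      = Real.tan (Real.pi / (4 * n)) := by
    rw [inv_sin_sub_cot]
    ring_nf
  rw [traceNorm_one_sub_cycleAdj_s11]
  obtain h_even | h_odd := n.even_or_odd
  · rw [traceNorm_one_add_cycleAdj_of_even h_even]
    exact ⟨le_rfl, iff_of_true rfl h_even,
      fun h_odd ↦ absurd h_even (Nat.not_even_iff_odd.mpr h_odd)⟩
  · rw [traceNorm_one_add_cycleAdj_of_odd h_odd]
    exact ⟨by linarith, iff_of_false (by linarith) (Nat.not_even_iff_odd.mpr h_odd),
      fun _ ↦ ⟨rfl, by linarith, by linarith⟩⟩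
end

section
/- Let x ≥ 0 and y ≥ 1 with n = x + y + 1, and let L be the Laplacian matrix of the oriented star S⃗_n(x, y) (center vertex with x out-arcs and y in-arcs). Then the multiset of eigenvalues of L·Lᵀ consists of 0 with multiplicity x, 1 with multiplicity y − 1, and the two roots of λ² − (x + x² + y + 1)λ + (x + x² + xy) = 0; equivalently, the singular values of L are 0 (x times), 1 (y − 1 times), and √(((x + x² + y + 1) ± √((x + x² + y + 1)² − 4(x + x² + xy)))/2). -/
open Matrix

/-!
The rows of `L` indexed by the out-neighbours vanish, so they contribute the factor `X ^ x` to the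
characteristic polynomial of `L * Lᵀ`. What remains is the Gram matrix of the other `y + 1` rows,
which is the identity plus a matrix that is constant on the blocks of the partition into
in-neighbours and center, and hence of the form `1 + A * B` with `A` having two columns. Passing
from `1 + A * B` to `1 + B * A` splits off `(X - 1) ^ (y - 1)` and leaves the characteristic
polynomial of a `2 × 2` matrix.
-/

open Polynomial

section Charpoly

variable {R m n : Type*} [CommRing R] [Fintype m] [DecidableEq m] [Fintype n] [DecidableEq n]

theorem charpoly_scalar_add (c : R) (M : Matrix n n R) :
    (scalar n c + M).charpoly = M.charpoly.comp (X - C c) := by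
  simpa [add_comm, sub_eq_add_neg] using charpoly_sub_scalar M (-c)

theorem charpoly_scalar_add_mul_comm_of_le (c : R) (A : Matrix m n R) (B : Matrix n m R)
    (hle : Fintype.card n ≤ Fintype.card m) :
    (scalar m c + A * B).charpoly =
      (X - C c) ^ (Fintype.card m - Fintype.card n) * (scalar n c + B * A).charpoly := by
  simp only [charpoly_scalar_add, charpoly_mul_comm_of_le A B hle, mul_comp, pow_comp, X_comp]

theorem charpoly_reindex_mul_transpose (e : m ≃ n) (M : Matrix m m R) :
    (reindex e e M * (reindex e e M)ᵀ).charpoly = (M * Mᵀ).charpoly := by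
  rw [transpose_reindex, reindex_apply, reindex_apply, submatrix_mul_equiv, ← reindex_apply,
    charpoly_reindex]

theorem charpoly_fromBlocks_zero_zero_mul_transpose (B : Matrix n m R) (D : Matrix n n R) :
    (fromBlocks (0 : Matrix m m R) 0 B D * (fromBlocks 0 0 B D)ᵀ).charpoly =
      X ^ Fintype.card m * (B * Bᵀ + D * Dᵀ).charpoly := by
  simp [fromBlocks_transpose, fromBlocks_multiply]

theorem charpoly_fromBlocks_scalar_add_const [Nonempty n] (a b b' c d : R) :
    (fromBlocks (scalar n c + of fun _ _ => d) (of fun _ _ => b) (of fun _ _ => b')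
      (of fun _ _ : Unit => a)).charpoly =
      (X - C c) ^ (Fintype.card n - 1) *
        (X ^ 2 - C (c + Fintype.card n * d + a) * X +
          C ((c + Fintype.card n * d) * a - Fintype.card n * (b * b'))) := by
  nontriviality R
  let A : Matrix (n ⊕ Unit) (Fin 2) R := fromRows (of fun _ => ![1, 0]) (of fun _ => ![0, 1])
  let B : Matrix (Fin 2) (n ⊕ Unit) R :=
    fromCols (of ![fun _ => d, fun _ => b']) (of ![fun _ => b, fun _ => a - c])
  have eq_scalar_add_mul : fromBlocks (scalar n c + of fun _ _ => d) (of fun _ _ => b)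
      (of fun _ _ => b') (of fun _ _ : Unit => a) = scalar (n ⊕ Unit) c + A * B := by
    ext (i | i) (j | j) <;> simp [A, B, mul_apply, diagonal_apply]
  have scalar_add_mul_swap : scalar (Fin 2) c + B * A =
      !![c + Fintype.card n * d, b; Fintype.card n * b', a] := by
    ext i j
    fin_cases i <;> fin_cases j <;> simp [A, B, mul_apply]
  have card_le : Fintype.card (Fin 2) ≤ Fintype.card (n ⊕ Unit) := by
    simpa using Nat.one_le_iff_ne_zero.mpr (Fintype.card_ne_zero (α := n))
  rw [eq_scalar_add_mul, charpoly_scalar_add_mul_comm_of_le c A B card_le, scalar_add_mul_swap,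
    charpoly_fin_two, trace_fin_two_of, det_fin_two_of, mul_left_comm b, Fintype.card_sum,
    Fintype.card_unit, Fintype.card_fin, Nat.add_sub_add_right _ 1 1]

end Charpoly

theorem roots_X_sq_sub_C_mul_X_add_C {s p : ℝ} (discrim_nonneg : 0 ≤ s ^ 2 - 4 * p) :
    (X ^ 2 - C s * X + C p).roots =
      {(s + √(s ^ 2 - 4 * p)) / 2, (s - √(s ^ 2 - 4 * p)) / 2} := by
  have vieta := (roots_quadratic_eq_pair_iff_of_ne_zero (one_ne_zero (α := ℝ)) (b := -s) (c := p)
    (x1 := (s + √(s ^ 2 - 4 * p)) / 2) (x2 := (s - √(s ^ 2 - 4 * p)) / 2)).mpr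
      ⟨by ring, by linear_combination Real.sq_sqrt discrim_nonneg / 4⟩
  simpa [sub_eq_add_neg] using vieta

theorem outDeg_reindex {m n : Type*} [Fintype m] [DecidableEq m] [Fintype n] [DecidableEq n]
    (e : m ≃ n) (A : Matrix m m ℝ) : outDeg (reindex e e A) = reindex e e (outDeg A) := by
  simp [outDeg, Function.comp_def, Equiv.sum_comp e.symm (A _)]

section OrientedStar

variable (V U : Type*)

/-- Adjacency matrix of the oriented star with out-neighbours `V` and in-neighbours `U`. The center
is the `Unit` vertex; it comes last so that the zero rows of the Laplacian form the first block. -/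
def orientedStarAdj : Matrix (V ⊕ U ⊕ Unit) (V ⊕ U ⊕ Unit) ℝ :=
  fromBlocks 0 0 (fromRows 0 (of fun _ _ => 1)) (fromBlocks 0 (of fun _ _ => 1) 0 0)

variable [Fintype V] [DecidableEq V] [Fintype U] [DecidableEq U]

/-- Laplacian matrix of the oriented star with out-neighbours `V` and in-neighbours `U`. -/
noncomputable def orientedStarLaplacian : Matrix (V ⊕ U ⊕ Unit) (V ⊕ U ⊕ Unit) ℝ :=
  outDeg (orientedStarAdj V U) - orientedStarAdj V U

theorem orientedStarLaplacian_eq_fromBlocks :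
    orientedStarLaplacian V U =
      fromBlocks 0 0 (fromRows 0 (of fun _ _ => -1))
        (fromBlocks 1 (of fun _ _ => -1) 0 (of fun _ _ => (Fintype.card V : ℝ))) := by
  ext (i | i | i) (j | j | j) <;>
    simp [orientedStarLaplacian, orientedStarAdj, outDeg, diagonal_apply, one_apply]

theorem charpoly_orientedStarLaplacian_mul_transpose [Nonempty U] :
    (orientedStarLaplacian V U * (orientedStarLaplacian V U)ᵀ).charpoly =
      X ^ Fintype.card V * ((X - C 1) ^ (Fintype.card U - 1) *
        (X ^ 2 - C (Fintype.card V + Fintype.card V ^ 2 + Fintype.card U + 1 : ℝ) * X +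
          C (Fintype.card V + Fintype.card V ^ 2 + Fintype.card V * Fintype.card U : ℝ))) := by
  set x := (Fintype.card V : ℝ)
  let B : Matrix (U ⊕ Unit) V ℝ := fromRows 0 (of fun _ _ => -1)
  let D : Matrix (U ⊕ Unit) (U ⊕ Unit) ℝ := fromBlocks 1 (of fun _ _ => -1) 0 (of fun _ _ => x)
  have gram_nonzero_rows : B * Bᵀ + D * Dᵀ =
      fromBlocks (scalar U 1 + of fun _ _ => 1) (of fun _ _ => -x) (of fun _ _ => -x)
        (of fun _ _ => x + x ^ 2) := by
    ext (i | i) (j | j) <;> simp [B, D, x, mul_apply, one_apply, sq]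
  have trace_eq : 1 + Fintype.card U * 1 + (x + x ^ 2) = x + x ^ 2 + Fintype.card U + 1 := by ring
  have det_eq : (1 + Fintype.card U * 1) * (x + x ^ 2) - Fintype.card U * (-x * -x) =
      x + x ^ 2 + x * Fintype.card U := by ring
  rw [orientedStarLaplacian_eq_fromBlocks, charpoly_fromBlocks_zero_zero_mul_transpose,
    gram_nonzero_rows, charpoly_fromBlocks_scalar_add_const, trace_eq, det_eq]

end OrientedStar

/-- The identification of the vertices `0`, `1, …, x` and `x + 1, …, x + y` of `starAdj x y` with
the center, the out-neighbours and the in-neighbours of `orientedStarAdj (Fin x) (Fin y)`. -/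
def starVertexEquiv (x y : ℕ) : Fin (x + y + 1) ≃ Fin x ⊕ Fin y ⊕ Unit :=
  (finSuccEquiv (x + y)).trans <| (Equiv.optionEquivSumPUnit _).trans <|
    (Equiv.sumCongr finSumFinEquiv.symm (Equiv.refl Unit)).trans <| Equiv.sumAssoc _ _ _

theorem reindex_starVertexEquiv_starAdj (x y : ℕ) :
    reindex (starVertexEquiv x y) (starVertexEquiv x y) (starAdj x y) =
      orientedStarAdj (Fin x) (Fin y) := by
  ext (i | i | i) (j | j | j) <;> simp [starVertexEquiv, starAdj, orientedStarAdj]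

theorem reindex_starVertexEquiv_starLaplacian (x y : ℕ) :
    reindex (starVertexEquiv x y) (starVertexEquiv x y) (outDeg (starAdj x y) - starAdj x y) =
      orientedStarLaplacian (Fin x) (Fin y) := by
  rw [orientedStarLaplacian, ← reindex_starVertexEquiv_starAdj, outDeg_reindex]
  rfl

theorem star_laplacian_singular_values (x y : ℕ) (hy : 1 ≤ y) :
    let L := outDeg (starAdj x y) - starAdj x y
    let s : ℝ := x + x ^ 2 + y + 1
    let p : ℝ := x + x ^ 2 + x * y
    (L * Lᵀ).charpoly.roots
      = Multiset.replicate x (0 : ℝ) + Multiset.replicate (y - 1) (1 : ℝ) +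
        {(s + Real.sqrt (s ^ 2 - 4 * p)) / 2, (s - Real.sqrt (s ^ 2 - 4 * p)) / 2} ∧
    singularValues L
      = Multiset.replicate x (0 : ℝ) + Multiset.replicate (y - 1) (1 : ℝ) +
        {Real.sqrt ((s + Real.sqrt (s ^ 2 - 4 * p)) / 2),
         Real.sqrt ((s - Real.sqrt (s ^ 2 - 4 * p)) / 2)} := by
  intro L s p
  have : Nonempty (Fin y) := ⟨⟨0, hy⟩⟩
  have charpoly_eq : (L * Lᵀ).charpoly =
      X ^ x * ((X - C 1) ^ (y - 1) * (X ^ 2 - C s * X + C p)) := by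
    rw [← charpoly_reindex_mul_transpose (starVertexEquiv x y),
      reindex_starVertexEquiv_starLaplacian, charpoly_orientedStarLaplacian_mul_transpose]
    simp only [Fintype.card_fin, s, p]
  have discrim_nonneg : 0 ≤ s ^ 2 - 4 * p := by
    have discrim_eq : s ^ 2 - 4 * p = ((x : ℝ) ^ 2 + x - y - 1) ^ 2 + 4 * x ^ 2 * y := by ring
    rw [discrim_eq]
    positivity
  have roots_eq : (L * Lᵀ).charpoly.roots = Multiset.replicate x 0 +
      Multiset.replicate (y - 1) 1 + {(s + √(s ^ 2 - 4 * p)) / 2, (s - √(s ^ 2 - 4 * p)) / 2} := by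
    have ne_zero := charpoly_eq ▸ (charpoly_monic (L * Lᵀ)).ne_zero
    rw [charpoly_eq, roots_mul ne_zero, roots_mul (right_ne_zero_of_mul ne_zero), roots_X_pow,
      roots_pow, roots_X_sub_C, roots_X_sq_sub_C_mul_X_add_C discrim_nonneg,
      Multiset.nsmul_singleton, Multiset.nsmul_singleton, ← add_assoc (Multiset.replicate x 0)]
  exact ⟨roots_eq, by simp [singularValues, roots_eq]⟩
end

section
/- The directed cycle C⃗_n is determined by its Laplacian singular values: if D is any digraph of order n (adjacency matrix a 0–1 matrix with zero diagonal) whose Laplacian matrix L(D) = Δ⁺(D) − A(D) has the same multiset of singular values as L(C⃗_n) = I_n − A(C⃗_n), namely {2·sin(πj/n) : j = 0, …, n−1}, then D is isomorphic to C⃗_n, i.e. there is a permutation matrix P with A(D) = P·A(C⃗_n)·Pᵀ. -/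
open Matrix

/-!
The singular values of `L` determine `tr (L Lᵀ)`, `tr ((L Lᵀ)²)` and `rank L`. For a digraph with
outdegrees `dᵢ`, `tr (L Lᵀ) = ∑ (dᵢ² + dᵢ)`, which equals `2n` for the cycle; corank at most one
allows at most one vertex with `dᵢ = 0`, and then counting forces every `dᵢ = 1`. So `D` is the
functional digraph of some `f` without fixed points, and `tr ((L Lᵀ)²)` is
`5n + ∑ |f⁻¹(j)|² + 2 |{i | f (f i) = i}|`. The last count is smallest for the cycle, so comparison
gives `∑ |f⁻¹(j)|² ≤ n` and `f` is a permutation. Finally `ker L` consists of the functions constant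
on the orbits of `f`, so corank one means that `f` is a single `n`-cycle.
-/

open Finset

section SingularValues

variable {m : Type*} [Fintype m]

theorem posSemidef_mul_transpose_self {l : Type*} [Finite l] (M : Matrix l m ℝ) :
    (M * Mᵀ).PosSemidef := by
  simpa only [conjTranspose_eq_transpose_of_trivial] using posSemidef_self_mul_conjTranspose M

variable [DecidableEq m]

theorem exists_unitary_conj_eq_of_charpoly_eq {𝕜 : Type*} [RCLike 𝕜] {H K : Matrix m m 𝕜}
    (hH : H.IsHermitian) (hK : K.IsHermitian) (h : H.charpoly = K.charpoly) :
    ∃ U : unitaryGroup m 𝕜, Unitary.conjStarAlgAut 𝕜 _ U K = H := by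
  have heig : hH.eigenvalues = hK.eigenvalues := (hH.eigenvalues_eq_eigenvalues_iff hK).mpr h
  refine ⟨hH.eigenvectorUnitary * hK.eigenvectorUnitary⁻¹, ?_⟩
  have hdiag : Unitary.conjStarAlgAut 𝕜 _ hK.eigenvectorUnitary⁻¹ K =
      diagonal (RCLike.ofReal ∘ hK.eigenvalues) :=
    hK.conjStarAlgAut_star_eigenvectorUnitary
  rw [map_mul, StarAlgEquiv.mul_apply, hdiag, ← heig, ← hH.spectral_theorem]

theorem map_sq_singularValues (M : Matrix m m ℝ) :
    (singularValues M).map (· ^ 2) = (M * Mᵀ).charpoly.roots := by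
  have hM := posSemidef_mul_transpose_self M
  rw [singularValues, hM.1.roots_charpoly_eq_eigenvalues]
  simp [Real.sq_sqrt (hM.eigenvalues_nonneg _)]

theorem charpoly_mul_transpose_eq_of_singularValues_eq {M N : Matrix m m ℝ}
    (h : singularValues M = singularValues N) : (M * Mᵀ).charpoly = (N * Nᵀ).charpoly := by
  rw [(posSemidef_mul_transpose_self M).1.splits_charpoly.eq_prod_roots_of_monic
      (charpoly_monic _),
    (posSemidef_mul_transpose_self N).1.splits_charpoly.eq_prod_roots_of_monic
      (charpoly_monic _),
    ← map_sq_singularValues, ← map_sq_singularValues, h]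

theorem exists_unitary_conj_eq_of_singularValues_eq {M N : Matrix m m ℝ}
    (h : singularValues M = singularValues N) :
    ∃ U : unitaryGroup m ℝ, Unitary.conjStarAlgAut ℝ _ U (N * Nᵀ) = M * Mᵀ :=
  exists_unitary_conj_eq_of_charpoly_eq (posSemidef_mul_transpose_self M).1
    (posSemidef_mul_transpose_self N).1 (charpoly_mul_transpose_eq_of_singularValues_eq h)

theorem trace_mul_transpose_pow_eq_of_singularValues_eq {M N : Matrix m m ℝ}
    (h : singularValues M = singularValues N) (k : ℕ) :
    ((M * Mᵀ) ^ k).trace = ((N * Nᵀ) ^ k).trace := by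
  obtain ⟨U, hU⟩ := exists_unitary_conj_eq_of_singularValues_eq h
  rw [← hU, ← map_pow, Unitary.conjStarAlgAut_apply, trace_mul_cycle, Unitary.coe_star_mul_self,
    one_mul]

theorem rank_eq_of_singularValues_eq {M N : Matrix m m ℝ}
    (h : singularValues M = singularValues N) : M.rank = N.rank := by
  obtain ⟨U, hU⟩ := exists_unitary_conj_eq_of_singularValues_eq h
  rw [← rank_self_mul_transpose M, ← rank_self_mul_transpose N, ← hU,
    Unitary.conjStarAlgAut_apply, ← Unitary.coe_star, rank_mul_eq_left_of_isUnit_det,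
    rank_mul_eq_right_of_isUnit_det]
  · exact UnitaryGroup.det_isUnit U
  · exact UnitaryGroup.det_isUnit (star U)

end SingularValues

section MatrixIdentities

theorem trace_sq_mul_comm {m n R : Type*} [Fintype m] [DecidableEq m] [Fintype n] [DecidableEq n]
    [CommSemiring R] (M : Matrix m n R) (N : Matrix n m R) :
    ((M * N) ^ 2).trace = ((N * M) ^ 2).trace := by
  rw [sq, sq, Matrix.mul_assoc, trace_mul_comm]
  simp only [Matrix.mul_assoc]

theorem trace_sq_transpose_mul_self {m n R : Type*} [Fintype m] [Fintype n] [DecidableEq n]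
    [CommSemiring R] (M : Matrix m n R) :
    ((Mᵀ * M) ^ 2).trace = ∑ i, ∑ j, (Mᵀ * M) i j ^ 2 := by
  have hsymm (i j : n) : (Mᵀ * M) j i = (Mᵀ * M) i j := by
    simp only [mul_apply, transpose_apply, mul_comm]
  rw [sq, Matrix.trace]
  simp only [diag_apply, mul_apply (M := Mᵀ * M), hsymm, sq]

theorem exists_permMatrix_conj_eq_of_isConj {V R : Type*} [Fintype V] [DecidableEq V]
    [NonAssocSemiring R] {τ ρ : Equiv.Perm V} (h : IsConj τ ρ) :
    ∃ σ : Equiv.Perm V,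
      τ.permMatrix R = σ.permMatrix R * ρ.permMatrix R * (σ.permMatrix R)ᵀ := by
  obtain ⟨σ, rfl⟩ := isConj_iff.mp h
  refine ⟨σ, ?_⟩
  rw [transpose_permMatrix, ← permMatrix_mul, ← permMatrix_mul]
  congr 1
  group

end MatrixIdentities

section Corank

variable {K l m : Type*} [Field K] [Fintype m]

theorem finrank_ker_mulVecLin_le_one_iff {M : Matrix l m K} :
    Module.finrank K (LinearMap.ker M.mulVecLin) ≤ 1 ↔ Fintype.card m ≤ M.rank + 1 := by
  have hnullity := LinearMap.finrank_range_add_finrank_ker M.mulVecLin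
  rw [Module.finrank_fintype_fun_eq_card] at hnullity
  rw [Matrix.rank]
  omega

theorem exists_smul_eq_of_mulVec_eq_zero {M : Matrix l m K} (hM : Fintype.card m ≤ M.rank + 1)
    {u v : m → K} (hu₀ : u ≠ 0) (hu : M *ᵥ u = 0) (hv : M *ᵥ v = 0) : ∃ c : K, c • u = v := by
  let u' : LinearMap.ker M.mulVecLin := ⟨u, hu⟩
  have hu' : u' ≠ 0 := fun h => hu₀ (congrArg Subtype.val h)
  have hker : Module.finrank K (LinearMap.ker M.mulVecLin) = 1 :=
    (finrank_ker_mulVecLin_le_one_iff.mpr hM).antisymm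
      (Module.finrank_pos_iff_exists_ne_zero.mpr ⟨u', hu'⟩)
  obtain ⟨c, hc⟩ := exists_smul_eq_of_finrank_eq_one hker hu' ⟨v, hv⟩
  exact ⟨c, congrArg Subtype.val hc⟩

theorem eq_of_row_eq_zero [Fintype l] {M : Matrix l m K} (hM : Fintype.card l ≤ M.rank + 1)
    {p q : l} (hp : M p = 0) (hq : M q = 0) : p = q := by
  classical
  by_contra hpq
  have hrank : Fintype.card l ≤ Mᵀ.rank + 1 := by rwa [rank_transpose]
  have hsingle (r : l) (hr : M r = 0) : Mᵀ *ᵥ Pi.single r 1 = 0 := by simp [row, hr]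
  obtain ⟨c, hc⟩ := exists_smul_eq_of_mulVec_eq_zero hrank (by simp) (hsingle p hp) (hsingle q hq)
  simpa [Ne.symm hpq] using congrFun hc q

end Corank

section Counting

theorem forall_eq_one_or_two_mul_card_add_four_le_sum_sq_add_self {ι : Type*} {s : Finset ι}
    {d : ι → ℕ} (hd : ∀ i ∈ s, d i ≠ 0) :
    (∀ i ∈ s, d i = 1) ∨ 2 * #s + 4 ≤ ∑ i ∈ s, (d i ^ 2 + d i) := by
  classical
  refine or_iff_not_imp_left.mpr fun hne => ?_
  push Not at hne
  obtain ⟨q, hq, hq₁⟩ := hne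
  have hterm : 6 ≤ d q ^ 2 + d q := by
    have : 2 ≤ d q := by have := hd q hq; omega
    nlinarith
  have hrest : #(s.erase q) * 2 ≤ ∑ i ∈ s.erase q, (d i ^ 2 + d i) := by
    rw [← smul_eq_mul]
    refine card_nsmul_le_sum _ _ _ fun i hi => ?_
    have : 1 ≤ d i := Nat.one_le_iff_ne_zero.mpr (hd i (mem_of_mem_erase hi))
    nlinarith
  have hcard := card_erase_add_one hq
  rw [← add_sum_erase s _ hq]
  omega

theorem eq_one_of_sum_sq_add_self_eq {ι : Type*} [Fintype ι] {d : ι → ℕ}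
    (hsum : ∑ i, (d i ^ 2 + d i) = 2 * Fintype.card ι)
    (hzero : ∀ i j, d i = 0 → d j = 0 → i = j) (i : ι) : d i = 1 := by
  classical
  rw [← card_univ] at hsum
  -- If `d p = 0`, the other terms exceed `2` by `2` in total;
  -- but that excess is `0` or at least `4`.
  have hpos (p : ι) : d p ≠ 0 := by
    intro hp
    have hcard := card_erase_add_one (mem_univ p)
    rw [← add_sum_erase _ _ (mem_univ p), hp] at hsum
    rcases forall_eq_one_or_two_mul_card_add_four_le_sum_sq_add_self (s := univ.erase p)
        fun i hi h => ne_of_mem_erase hi (hzero i p h hp) with hone | hlarge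
    · have : ∑ i ∈ univ.erase p, (d i ^ 2 + d i) = #(univ.erase p) * 2 :=
        sum_const_nat fun i hi => by rw [hone i hi]; rfl
      omega
    · omega
  rcases forall_eq_one_or_two_mul_card_add_four_le_sum_sq_add_self fun i (_ : i ∈ univ) => hpos i
    with hone | hlarge
  · exact hone i (mem_univ i)
  · omega

theorem sum_card_fiber_sq_le_card_iff_injective {α β : Type*} [Fintype α] [Fintype β]
    [DecidableEq β] {f : α → β} :
    ∑ b, #{a | f a = b} ^ 2 ≤ Fintype.card α ↔ Function.Injective f := by
  have hcard : Fintype.card α = ∑ b, #{a | f a = b} :=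
    card_eq_sum_card_fiberwise fun _ _ => mem_univ _
  rw [hcard]
  constructor
  · intro hle a a' haa'
    have hself (b : β) : #{a | f a = b} ≤ #{a | f a = b} ^ 2 := Nat.le_self_pow two_ne_zero _
    have hsq := (sum_eq_sum_iff_of_le fun b _ => hself b).mp
      ((sum_le_sum fun b _ => hself b).antisymm hle) (f a') (mem_univ _)
    have hone : #{a | f a = f a'} ≤ 1 := by nlinarith
    exact card_le_one.mp hone a (by simpa using haa') a' (by simp)
  · intro hf
    refine sum_le_sum fun b _ => ?_
    have hone : #{a | f a = b} ≤ 1 := card_le_one.mpr fun a ha a' ha' =>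
      hf (((mem_filter.mp ha).2).trans (mem_filter.mp ha').2.symm)
    nlinarith

end Counting

section Adjacency

variable {V : Type*} [Fintype V]

open Classical in
/-- The set of out-neighbours of the vertex `i` in the digraph with adjacency matrix `A`. -/
noncomputable def outNeighbors (A : Matrix V V ℝ) (i : V) : Finset V :=
  {j | A i j = 1}

/-- The Laplacian matrix `L(D) = Δ⁺(D) - A(D)` of the digraph `D` with adjacency matrix `A`. -/
noncomputable def laplacian [DecidableEq V] (A : Matrix V V ℝ) : Matrix V V ℝ :=
  outDeg A - A

/-- The adjacency matrix of the functional digraph of `f`, whose arcs are the pairs `(i, f i)`: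
these are the digraphs in which all outdegrees are `1`. -/
def functionalAdj {V : Type*} [DecidableEq V] (f : V → V) : Matrix V V ℝ :=
  of fun i j => if f i = j then 1 else 0

variable {A : Matrix V V ℝ}

theorem apply_eq_ite_mem_outNeighbors [DecidableEq V] (h01 : ∀ i j, A i j = 0 ∨ A i j = 1)
    (i j : V) : A i j = if j ∈ outNeighbors A i then 1 else 0 := by
  rcases h01 i j with h | h <;> simp [outNeighbors, h]

theorem sum_row_eq_card_outNeighbors (h01 : ∀ i j, A i j = 0 ∨ A i j = 1) (i : V) :
    ∑ j, A i j = #(outNeighbors A i) := by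
  classical
  simp [apply_eq_ite_mem_outNeighbors h01 i]

variable [DecidableEq V]

theorem laplacian_row_eq_zero_of_card_outNeighbors_eq_zero
    (h01 : ∀ i j, A i j = 0 ∨ A i j = 1) {i : V} (hi : #(outNeighbors A i) = 0) :
    laplacian A i = 0 := by
  have hrow (j : V) : A i j = 0 := by
    simp [apply_eq_ite_mem_outNeighbors h01, card_eq_zero.mp hi]
  ext j
  simp [laplacian, outDeg, diagonal_apply, hrow]

theorem trace_laplacian_mul_transpose (h01 : ∀ i j, A i j = 0 ∨ A i j = 1)
    (hdiag : ∀ i, A i i = 0) :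
    (laplacian A * (laplacian A)ᵀ).trace =
      ∑ i, ((#(outNeighbors A i) : ℝ) ^ 2 + #(outNeighbors A i)) := by
  have hentry (i j : V) : laplacian A i j * laplacian A i j =
      (if i = j then (#(outNeighbors A i) : ℝ) ^ 2 else 0) + A i j := by
    rw [← sum_row_eq_card_outNeighbors h01]
    rcases eq_or_ne i j with rfl | hij
    · simp [laplacian, outDeg, hdiag, sq]
    · rcases h01 i j with h | h <;> simp [laplacian, outDeg, hij, h]
  simp [Matrix.trace, mul_apply, hentry, sum_add_distrib, sum_row_eq_card_outNeighbors h01]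

theorem card_outNeighbors_eq_one_of_trace_of_rank (h01 : ∀ i j, A i j = 0 ∨ A i j = 1)
    (hdiag : ∀ i, A i i = 0)
    (htrace : (laplacian A * (laplacian A)ᵀ).trace = 2 * Fintype.card V)
    (hrank : Fintype.card V ≤ (laplacian A).rank + 1) (i : V) : #(outNeighbors A i) = 1 := by
  rw [trace_laplacian_mul_transpose h01 hdiag] at htrace
  refine eq_one_of_sum_sq_add_self_eq (mod_cast htrace) (fun p q hp hq => ?_) i
  exact eq_of_row_eq_zero hrank (laplacian_row_eq_zero_of_card_outNeighbors_eq_zero h01 hp)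
    (laplacian_row_eq_zero_of_card_outNeighbors_eq_zero h01 hq)

theorem exists_eq_functionalAdj_of_card_outNeighbors_eq_one
    (h01 : ∀ i j, A i j = 0 ∨ A i j = 1) (hout : ∀ i, #(outNeighbors A i) = 1) :
    ∃ f : V → V, A = functionalAdj f := by
  choose f hf using fun i => card_eq_one.mp (hout i)
  refine ⟨f, ?_⟩
  ext i j
  simp [apply_eq_ite_mem_outNeighbors h01 i j, hf, functionalAdj, eq_comm]

end Adjacency

section FunctionalDigraph

variable {V : Type*} [DecidableEq V]

theorem functionalAdj_apply_self_eq_zero_iff {f : V → V} {i : V} :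
    functionalAdj f i i = 0 ↔ f i ≠ i := by
  simp [functionalAdj]

theorem functionalAdj_perm (σ : Equiv.Perm V) : functionalAdj σ = σ.permMatrix ℝ := by
  ext i j
  simp [functionalAdj, PEquiv.toMatrix_apply, Equiv.toPEquiv_apply, eq_comm]

variable [Fintype V] {f g : V → V}

theorem laplacian_functionalAdj (f : V → V) :
    laplacian (functionalAdj f) = 1 - functionalAdj f := by
  simp [laplacian, outDeg, functionalAdj]

theorem outNeighbors_functionalAdj (f : V → V) (i : V) :
    outNeighbors (functionalAdj f) i = {f i} := by
  ext j
  simp [outNeighbors, functionalAdj, eq_comm]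

theorem trace_laplacian_functionalAdj_mul_transpose (hf : ∀ i, f i ≠ i) :
    (laplacian (functionalAdj f) * (laplacian (functionalAdj f))ᵀ).trace =
      2 * Fintype.card V := by
  rw [trace_laplacian_mul_transpose
    (fun i j => by rw [functionalAdj, of_apply]; split_ifs <;> simp)
    fun i => functionalAdj_apply_self_eq_zero_iff.mpr (hf i)]
  simp only [outNeighbors_functionalAdj, card_singleton, sum_const, card_univ, nsmul_eq_mul]
  ring

theorem transpose_mul_laplacian_functionalAdj_apply (f : V → V) (i j : V) :
    ((laplacian (functionalAdj f))ᵀ * laplacian (functionalAdj f)) i j =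
      (if i = j then 1 + (#{k | f k = i} : ℝ) else 0)
        - (if f i = j then 1 else 0) - (if f j = i then 1 else 0) := by
  have hexpand : (laplacian (functionalAdj f))ᵀ * laplacian (functionalAdj f) =
      1 + (functionalAdj f)ᵀ * functionalAdj f - functionalAdj f - (functionalAdj f)ᵀ := by
    rw [laplacian_functionalAdj, transpose_sub, transpose_one]
    noncomm_ring
  have hgram : ((functionalAdj f)ᵀ * functionalAdj f) i j =
      if i = j then (#{k | f k = i} : ℝ) else 0 := by
    simp only [mul_apply, transpose_apply, functionalAdj, of_apply, ite_mul, one_mul, zero_mul]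
    split_ifs with hij
    · simp +contextual [hij]
    · refine sum_eq_zero fun k _ => ?_
      grind
  rw [hexpand, Matrix.sub_apply, Matrix.sub_apply, Matrix.add_apply, hgram, one_apply]
  simp only [functionalAdj, transpose_apply, of_apply]
  split_ifs <;> ring

theorem trace_sq_laplacian_functionalAdj_mul_transpose (hf : ∀ i, f i ≠ i) :
    ((laplacian (functionalAdj f) * (laplacian (functionalAdj f))ᵀ) ^ 2).trace =
      5 * Fintype.card V + ∑ j, (#{i | f i = j} : ℝ) ^ 2 + 2 * #{i | f (f i) = i} := by
  have hentry (i j : V) :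
      ((laplacian (functionalAdj f))ᵀ * laplacian (functionalAdj f)) i j ^ 2 =
        (if i = j then (1 + (#{k | f k = i} : ℝ)) ^ 2 else 0) + (if f i = j then 1 else 0)
          + (if f j = i then 1 else 0)
          + 2 * (if f i = j then if f j = i then 1 else 0 else 0) := by
    rw [transpose_mul_laplacian_functionalAdj_apply]
    rcases eq_or_ne i j with rfl | hij
    · simp [hf]
    · simp only [hij, if_false]
      split_ifs <;> norm_num
  have hindeg : ∑ j, (#{i | f i = j} : ℝ) = Fintype.card V := by
    exact_mod_cast (card_eq_sum_card_fiberwise fun i _ => mem_univ (f i)).symm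
  rw [trace_sq_mul_comm, trace_sq_transpose_mul_self]
  simp only [hentry, sum_add_distrib, ← mul_sum, sum_ite_eq, mem_univ, if_true, add_sq,
    hindeg, sum_boole, one_pow, sum_const, card_univ, nsmul_eq_mul, mul_one]
  ring

theorem injective_of_trace_sq_laplacian_functionalAdj_eq (hf : ∀ i, f i ≠ i)
    (hg : ∀ i, g i ≠ i) (hginj : Function.Injective g) (hperiod : ∀ i, g (g i) = i → f (f i) = i)
    (htrace : ((laplacian (functionalAdj f) * (laplacian (functionalAdj f))ᵀ) ^ 2).trace =
      ((laplacian (functionalAdj g) * (laplacian (functionalAdj g))ᵀ) ^ 2).trace) :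
    Function.Injective f := by
  rw [trace_sq_laplacian_functionalAdj_mul_transpose hf,
    trace_sq_laplacian_functionalAdj_mul_transpose hg] at htrace
  have hbalance : 5 * Fintype.card V + ∑ j, #{i | f i = j} ^ 2 + 2 * #{i | f (f i) = i} =
      5 * Fintype.card V + ∑ j, #{i | g i = j} ^ 2 + 2 * #{i | g (g i) = i} :=
    mod_cast htrace
  have hfibers := sum_card_fiber_sq_le_card_iff_injective.mpr hginj
  have hcard : #{i | g (g i) = i} ≤ #{i | f (f i) = i} :=
    card_le_card (monotone_filter_right _ fun i _ => hperiod i)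
  exact sum_card_fiber_sq_le_card_iff_injective.mp (by omega)

theorem laplacian_functionalAdj_mulVec_eq_zero_iff {v : V → ℝ} :
    laplacian (functionalAdj f) *ᵥ v = 0 ↔ ∀ i, v (f i) = v i := by
  rw [laplacian_functionalAdj]
  simp [sub_mulVec, funext_iff, sub_eq_zero, functionalAdj, mulVec, dotProduct, eq_comm]

theorem card_le_rank_laplacian_functionalAdj_perm_add_one_iff {σ : Equiv.Perm V} :
    Fintype.card V ≤ (laplacian (functionalAdj σ)).rank + 1 ↔ ∀ x y, σ.SameCycle x y := by
  constructor
  · intro hrank x y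
    classical
    -- Indicators of orbits and constants lie in the kernel, which is a line.
    obtain ⟨c, hc⟩ := exists_smul_eq_of_mulVec_eq_zero hrank (u := 1)
      (v := fun z => if σ.SameCycle x z then 1 else 0)
      (fun h => one_ne_zero (congrFun h x))
      (laplacian_functionalAdj_mulVec_eq_zero_iff.mpr fun _ => rfl)
      (laplacian_functionalAdj_mulVec_eq_zero_iff.mpr fun z => by
        simp only [Equiv.Perm.sameCycle_apply_right])
    have hx : c = 1 := by simpa [Equiv.Perm.SameCycle.refl] using congrFun hc x
    simpa [hx] using congrFun hc y
  · intro hsame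
    rw [← finrank_ker_mulVecLin_le_one_iff]
    refine finrank_le_one ⟨1, laplacian_functionalAdj_mulVec_eq_zero_iff.mpr fun _ => rfl⟩ ?_
    rintro ⟨v, hv⟩
    have hinv := laplacian_functionalAdj_mulVec_eq_zero_iff.mp hv
    have hconst (x y : V) : v x = v y := by
      obtain ⟨k, rfl⟩ := (hsame x y).exists_nat_pow_eq
      induction k with
      | zero => rfl
      | succ k ih => rw [pow_succ', Equiv.Perm.mul_apply, hinv, ih]
    rcases isEmpty_or_nonempty V with _ | ⟨⟨x⟩⟩
    · exact ⟨0, Subsingleton.elim _ _⟩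
    · exact ⟨v x, Subtype.ext <| funext fun y => by simp [hconst x y]⟩

end FunctionalDigraph

section DirectedCycle

variable {n : ℕ}

theorem cycleAdj_eq_functionalAdj_finRotate : cycleAdj n = functionalAdj (finRotate n) := by
  ext i j
  have := i.neZero
  simp [cycleAdj, functionalAdj, finRotate_apply, Fin.ext_iff, Fin.val_add, eq_comm]

theorem finRotate_apply_ne_self (hn : 2 ≤ n) (i : Fin n) : finRotate n i ≠ i := by
  rw [← Equiv.Perm.mem_support, support_finRotate_of_le hn]
  exact mem_univ i

theorem sameCycle_finRotate (hn : 2 ≤ n) (i j : Fin n) : (finRotate n).SameCycle i j :=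
  (isCycle_finRotate_of_le hn).sameCycle (finRotate_apply_ne_self hn i)
    (finRotate_apply_ne_self hn j)

theorem le_two_of_finRotate_finRotate_eq_self (hn : 2 ≤ n) {i : Fin n}
    (hi : finRotate n (finRotate n i) = i) : n ≤ 2 := by
  have hcycle := isCycle_finRotate_of_le hn
  have hsq : finRotate n ^ 2 = 1 :=
    (hcycle.pow_eq_one_iff' (finRotate_apply_ne_self hn i)).mpr (by simpa [sq] using hi)
  have hdvd := orderOf_dvd_of_pow_eq_one hsq
  rw [hcycle.orderOf, support_finRotate_of_le hn, card_fin] at hdvd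
  exact Nat.le_of_dvd two_pos hdvd

theorem apply_apply_eq_self_of_le_two (hn : n ≤ 2) {f : Fin n → Fin n} (hf : ∀ i, f i ≠ i)
    (i : Fin n) : f (f i) = i := by
  have := hf i
  have := hf (f i)
  omega

theorem isConj_finRotate_of_sameCycle (hn : 2 ≤ n) {τ : Equiv.Perm (Fin n)}
    (hfix : ∀ i, τ i ≠ i) (hsame : ∀ i j, τ.SameCycle i j) : IsConj τ (finRotate n) := by
  have hcycle : τ.IsCycle := ⟨⟨0, by omega⟩, hfix _, fun j _ => hsame _ j⟩
  have hsupport : τ.support = univ := by ext i; simp [hfix]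
  exact hcycle.isConj (isCycle_finRotate_of_le hn) (by rw [hsupport, support_finRotate_of_le hn])

end DirectedCycle

theorem cycle_determined_by_laplacian_singular_values
    (n : ℕ) (hn : 2 ≤ n) (A : Matrix (Fin n) (Fin n) ℝ)
    (h01 : ∀ i j, A i j = 0 ∨ A i j = 1) (hdiag : ∀ i, A i i = 0)
    (hsv : singularValues (outDeg A - A) = singularValues (1 - cycleAdj n)) :
    ∃ σ : Equiv.Perm (Fin n),
      A = σ.permMatrix ℝ * cycleAdj n * (σ.permMatrix ℝ)ᵀ := by
  have hfix := finRotate_apply_ne_self hn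
  have hlap : singularValues (laplacian A) =
      singularValues (laplacian (functionalAdj (finRotate n))) := by
    rw [laplacian_functionalAdj, ← cycleAdj_eq_functionalAdj_finRotate]
    exact hsv
  have htrace (k : ℕ) := trace_mul_transpose_pow_eq_of_singularValues_eq hlap k
  have hrank : Fintype.card (Fin n) ≤ (laplacian A).rank + 1 := by
    rw [rank_eq_of_singularValues_eq hlap]
    exact card_le_rank_laplacian_functionalAdj_perm_add_one_iff.mpr (sameCycle_finRotate hn)
  have hout := card_outNeighbors_eq_one_of_trace_of_rank h01 hdiag (by
    simpa [trace_laplacian_functionalAdj_mul_transpose hfix] using htrace 1) hrank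
  obtain ⟨f, rfl⟩ := exists_eq_functionalAdj_of_card_outNeighbors_eq_one h01 hout
  have hf (i : Fin n) : f i ≠ i := functionalAdj_apply_self_eq_zero_iff.mp (hdiag i)
  have hinj := injective_of_trace_sq_laplacian_functionalAdj_eq hf hfix (finRotate n).injective
    (fun i hi => apply_apply_eq_self_of_le_two (le_two_of_finRotate_finRotate_eq_self hn hi) hf i)
    (htrace 2)
  obtain ⟨τ, rfl⟩ : ∃ τ : Equiv.Perm (Fin n), ⇑τ = f :=
    ⟨.ofBijective f (Finite.injective_iff_bijective.mp hinj), rfl⟩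
  have hsame := card_le_rank_laplacian_functionalAdj_perm_add_one_iff.mp hrank
  rw [cycleAdj_eq_functionalAdj_finRotate, functionalAdj_perm, functionalAdj_perm]
  exact exists_permMatrix_conj_eq_of_isConj (isConj_finRotate_of_sameCycle hn hf hsame)
end
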